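/- There exist first-order formulas φ_Q(x,u) and φ_R(x,u) over the language with binary relation symbols for < and ◁ and unary relation symbols for C and Q such that for every n ∈ ℕ and all a,b ∈ {0,...,n}, the finite prefix structure ({0,...,n}, <, ◁, C, Q) satisfies φ_Q(a,b) iff bit r(b) of the binary representation of q(a) is 1, and satisfies φ_R(a,b) iff bit r(b) of the binary representation of r(a) is 1. -/

import Mathlib

open FirstOrder Language

/-- `q_i = i(i+1)/2`, the smallest element of column `i`. -/
def qseq (i : ℕ) : ℕ := i * (i + 1) / 2

/-- `c(x)`, the column number of `x`: the largest `i` with `q_i ≤ x`. -/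
def col (x : ℕ) : ℕ := Nat.findGreatest (fun i => qseq i ≤ x) x

/-- `q(x) = q_{c(x)}`, the bottom-most element of the column of `x`. -/
def qf (x : ℕ) : ℕ := qseq (col x)

/-- `r(x) = x - q(x)`, the row number of `x`. -/
def rowf (x : ℕ) : ℕ := x - qf x

/-- The row-major linear order `◁`. -/
def ordc (x y : ℕ) : Prop := rowf x < rowf y ∨ (rowf x = rowf y ∧ col x < col y)

/-- The unary predicate `C`: bit `r(x)` of `c(x)+1` is 1. -/
def Cpred (x : ℕ) : Prop := Nat.testBit (col x + 1) (rowf x) = true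

/-- The unary predicate `Q`: bit `r(x)` of `q_{c(x)+1}` is 1. -/
def Qpred (x : ℕ) : Prop := Nat.testBit (qseq (col x + 1)) (rowf x) = true

/-- Relation symbols of the language with binary `<`, `◁` and unary `C`, `Q`. -/
inductive Rel4 : ℕ → Type
  | lt : Rel4 2
  | ordc : Rel4 2
  | C : Rel4 1
  | Q : Rel4 1

/-- The language with binary relation symbols for `<` and `◁` and unary `C`, `Q`. -/
def L4 : Language := ⟨fun _ => Empty, Rel4⟩

/-- The finite prefix structure `({0,...,n}, <, ◁, C, Q)`. -/
def struct4 (n : ℕ) : L4.Structure (Fin (n + 1)) where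
  funMap := fun f _ => f.elim
  RelMap := fun r v =>
    match r with
    | .lt => (v 0 : ℕ) < (v 1 : ℕ)
    | .ordc => ordc (v 0 : ℕ) (v 1 : ℕ)
    | .C => Cpred (v 0 : ℕ)
    | .Q => Qpred (v 0 : ℕ)

theorem qseq_succ (i : ℕ) : qseq (i + 1) = qseq i + i + 1 := by
  unfold qseq
  have : (i + 1) * (i + 1 + 1) = i * (i + 1) + 2 * (i + 1) := by ring
  rw [this]
  omega

theorem qseq_lt {i j : ℕ} (h : i < j) : qseq i + i < qseq j := by
  induction j, h using Nat.le_induction with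
  | base => rw [qseq_succ]; omega
  | succ j hj ih => rw [qseq_succ]; omega

theorem le_qseq (i : ℕ) : i ≤ qseq i := by
  induction i with
  | zero => simp
  | succ i ih => rw [qseq_succ]; omega

theorem qseq_col_le (x : ℕ) : qseq (col x) ≤ x := by
  unfold col
  exact Nat.findGreatest_spec (P := fun i => qseq i ≤ x) (Nat.zero_le x) (by simp [qseq])

theorem lt_qseq_col (x : ℕ) : x < qseq (col x + 1) := by
  by_contra h
  have h' : qseq (col x + 1) ≤ x := by omega
  have h1 : col x + 1 ≤ x := (le_qseq _).trans h'
  have := Nat.le_findGreatest (P := fun i => qseq i ≤ x) h1 h'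
  unfold col at this
  omega

theorem decomp (x : ℕ) : x = qseq (col x) + rowf x ∧ rowf x ≤ col x := by
  have h1 := qseq_col_le x
  have h2 := lt_qseq_col x
  rw [qseq_succ] at h2
  unfold rowf qf
  omega

theorem col_row_mk {c r : ℕ} (h : r ≤ c) : col (qseq c + r) = c ∧ rowf (qseq c + r) = r := by
  obtain ⟨h1, h2⟩ := decomp (qseq c + r)
  have : col (qseq c + r) = c := by
    rcases lt_trichotomy (col (qseq c + r)) c with h3 | h3 | h3
    · have := qseq_lt h3; omega
    · exact h3
    · have := qseq_lt h3; omega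
  rw [this] at h1
  exact ⟨this, by omega⟩

theorem lt_iff_col (x y : ℕ) : x < y ↔ col x < col y ∨ (col x = col y ∧ rowf x < rowf y) := by
  obtain ⟨h1, h2⟩ := decomp x
  obtain ⟨h3, h4⟩ := decomp y
  rcases lt_trichotomy (col x) (col y) with h | h | h
  · have := qseq_lt h; omega
  · rw [h] at h1; omega
  · have := qseq_lt h; omega

theorem eq_iff_col (x y : ℕ) : x = y ↔ col x = col y ∧ rowf x = rowf y := by
  constructor
  · rintro rfl; simp
  · rintro ⟨h, h'⟩
    rw [(decomp x).1, (decomp y).1, h, h']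

theorem qseq_lt_two_pow (c : ℕ) : qseq c < 2 ^ c := by
  rcases c with _ | c
  · simp [qseq]
  · induction c with
    | zero => simp [qseq]
    | succ c ih =>
      rw [qseq_succ, pow_succ]
      have := le_qseq (c + 1)
      have h : ∀ c, c + 2 ≤ 2 ^ (c + 1) := by
        intro c
        have := Nat.lt_two_pow_self (n := c + 1)
        omega
      have := h c
      omega

/-- an element of a prefix, by coordinates -/
theorem exists_pt {n : ℕ} {c r : ℕ} (h : r ≤ c) (a : Fin (n + 1))
    (ha : c < col a ∨ (c = col a ∧ r ≤ rowf a)) :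
    ∃ z : Fin (n + 1), col z = c ∧ rowf z = r := by
  have hz := col_row_mk h
  have : qseq c + r ≤ a := by
    by_contra hlt
    have := (lt_iff_col a (qseq c + r)).1 (by omega)
    rw [hz.1, hz.2] at this
    omega
  exact ⟨⟨qseq c + r, by omega⟩, hz⟩

/-- Definability by a formula with variables indexed by `ℕ`, uniformly in `n`. -/
def DefP (P : ∀ n : ℕ, (ℕ → Fin (n + 1)) → Prop) : Prop :=
  ∃ φ : L4.Formula ℕ, ∀ n v, (letI := struct4 n; φ.Realize v) ↔ P n v

theorem DefP.not {P} (h : DefP P) : DefP (fun n v => ¬ P n v) := by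
  obtain ⟨φ, h⟩ := h
  exact ⟨φ.not, fun n v => by
    letI := struct4 n
    beta_reduce
    rw [← h n v]
    exact Formula.realize_not⟩

theorem DefP.and {P P'} (h : DefP P) (h' : DefP P') : DefP (fun n v => P n v ∧ P' n v) := by
  obtain ⟨φ, h⟩ := h
  obtain ⟨φ', h'⟩ := h'
  exact ⟨φ ⊓ φ', fun n v => by
    letI := struct4 n
    beta_reduce
    rw [← h n v, ← h' n v]
    exact Formula.realize_inf⟩

theorem DefP.congr {P P'} (h : DefP P) (e : ∀ n v, P n v ↔ P' n v) : DefP P' := by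
  obtain ⟨φ, h⟩ := h
  exact ⟨φ, fun n v => (h n v).trans (e n v)⟩

theorem DefP.or {P P'} (h : DefP P) (h' : DefP P') : DefP (fun n v => P n v ∨ P' n v) :=
  (h.not.and h'.not).not.congr fun n v => by tauto

theorem DefP.ex {P : ∀ n : ℕ, (ℕ → Fin (n + 1)) → Fin (n + 1) → Prop}
    (h : DefP (fun n v => P n (fun i => v (i + 1)) (v 0))) :
    DefP (fun n v => ∃ x, P n v x) := by
  obtain ⟨φ, h⟩ := h
  let g : ℕ → ℕ ⊕ Unit := fun i => Nat.casesOn i (Sum.inr ()) (fun j => Sum.inl j)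
  refine ⟨Formula.iExs Unit (φ.relabel g), fun n v => ?_⟩
  letI := struct4 n
  have key : ∀ i : Unit → Fin (n + 1),
      (φ.relabel g).Realize (Sum.elim v i) ↔ P n v (i ()) := by
    intro i
    rw [Formula.realize_relabel]
    exact h n _
  refine Formula.realize_iExs.trans ?_
  constructor
  · rintro ⟨i, hi⟩
    exact ⟨i (), (key i).1 hi⟩
  · rintro ⟨x, hx⟩
    exact ⟨fun _ => x, (key _).2 hx⟩

theorem def_lt (i j : ℕ) : DefP (fun _ v => (v i : ℕ) < (v j : ℕ)) :=
  ⟨Relations.formula₂ (L := L4) (Rel4.lt : L4.Relations 2) (Term.var i) (Term.var j), fun n v => by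
    letI := struct4 n
    exact Formula.realize_rel₂⟩

theorem def_ordc (i j : ℕ) : DefP (fun _ v => ordc (v i : ℕ) (v j : ℕ)) :=
  ⟨Relations.formula₂ (L := L4) (Rel4.ordc : L4.Relations 2) (Term.var i) (Term.var j), fun n v => by
    letI := struct4 n
    exact Formula.realize_rel₂⟩

theorem def_C (i : ℕ) : DefP (fun _ v => Cpred (v i : ℕ)) :=
  ⟨Relations.formula₁ (L := L4) (Rel4.C : L4.Relations 1) (Term.var i), fun n v => by
    letI := struct4 n
    exact Formula.realize_rel₁⟩

theorem def_Q (i : ℕ) : DefP (fun _ v => Qpred (v i : ℕ)) :=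
  ⟨Relations.formula₁ (L := L4) (Rel4.Q : L4.Relations 1) (Term.var i), fun n v => by
    letI := struct4 n
    exact Formula.realize_rel₁⟩

theorem def_le (i j : ℕ) : DefP (fun _ v => (v i : ℕ) ≤ (v j : ℕ)) :=
  (def_lt j i).not.congr fun n v => by simp

theorem def_eq (i j : ℕ) : DefP (fun _ v => (v i : ℕ) = (v j : ℕ)) :=
  ((def_le i j).and (def_le j i)).congr fun n v => by omega

theorem def_zero (i : ℕ) : DefP (fun _ v => (v i : ℕ) = 0) := by
  refine (DefP.ex (P := fun n v y => (y : ℕ) < (v i : ℕ)) (def_lt 0 (i + 1))).not.congr ?_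
  intro n v
  constructor
  · intro h
    by_contra h0
    exact h ⟨⟨0, by omega⟩, by simp only []; omega⟩
  · rintro h ⟨y, hy⟩
    omega

theorem def_succ (i j : ℕ) : DefP (fun _ v => (v i : ℕ) + 1 = (v j : ℕ)) := by
  refine ((def_lt i j).and (DefP.ex (P := fun n v z => (v i : ℕ) < (z : ℕ) ∧ (z : ℕ) < (v j : ℕ))
    ((def_lt (i + 1) 0).and (def_lt 0 (j + 1)))).not).congr ?_
  intro n v
  constructor
  · rintro ⟨h, h'⟩
    by_contra h0
    exact h' ⟨⟨(v i : ℕ) + 1, by omega⟩, by simp; omega⟩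
  · rintro h
    refine ⟨by omega, ?_⟩
    rintro ⟨y, hy⟩
    omega

theorem bottom_iff (n : ℕ) (x : Fin (n + 1)) :
    (¬ ∃ y : Fin (n + 1), (y : ℕ) + 1 = (x : ℕ) ∧ ¬ ((y : ℕ) = 0 ∨ ordc x y)) ↔ rowf x = 0 := by
  have h0 : qseq 0 = 0 := by simp [qseq]
  have h1 : qseq 1 = 1 := by simp [qseq]
  have c0 := col_row_mk (c := 0) (r := 0) le_rfl
  have c1 := col_row_mk (c := 1) (r := 0) (by omega)
  rw [h0] at c0
  rw [h1] at c1
  simp only [add_zero] at c0 c1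
  constructor
  · intro h
    by_contra hr
    obtain ⟨hx, hx'⟩ := decomp x
    apply h
    have hz := col_row_mk (c := col x) (r := rowf x - 1) (by omega)
    have e : qseq (col x) + (rowf x - 1) = x - 1 := by omega
    rw [e] at hz
    refine ⟨⟨(x : ℕ) - 1, by omega⟩, by simp; omega, ?_⟩
    simp only [ordc, hz]
    rintro (h2 | h2)
    · have : (x : ℕ) = 1 := by omega
      rw [this, c1.2] at hr
      exact hr rfl
    · omega
  · rintro hr ⟨y, hy, hy'⟩
    apply hy'
    by_cases hy0 : (y : ℕ) = 0
    · exact Or.inl hy0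
    right
    left
    rw [hr]
    by_contra h
    obtain ⟨hx, -⟩ := decomp x
    obtain ⟨hyy, -⟩ := decomp y
    have hy1 : (y : ℕ) = qseq (col y) := by omega
    have hx1 : (x : ℕ) = qseq (col x) := by omega
    have : col y < col x := by
      rcases (lt_iff_col y x).1 (by omega) with h | h <;> omega
    have := qseq_lt this
    have hc : col y = 0 := by omega
    rw [hc, h0] at hy1
    exact hy0 hy1

theorem def_bottom (i : ℕ) : DefP (fun _ v => rowf (v i) = 0) :=
  (DefP.ex (P := fun n v y => (y : ℕ) + 1 = (v i : ℕ) ∧ ¬ ((y : ℕ) = 0 ∨ ordc (v i) y))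
    ((def_succ 0 (i + 1)).and ((def_zero 0).or (def_ordc (i + 1) 0)).not)).not.congr
    fun n v => bottom_iff n (v i)

theorem def_colLt (i j : ℕ) : DefP (fun _ v => col (v i) < col (v j)) := by
  refine (DefP.ex (P := fun n v z => (v i : ℕ) < (z : ℕ) ∧ (z : ℕ) ≤ (v j : ℕ) ∧ rowf z = 0)
    ((def_lt (i + 1) 0).and ((def_le 0 (j + 1)).and (def_bottom 0)))).congr ?_
  intro n v
  constructor
  · rintro ⟨z, h1, h2, h3⟩
    rw [← not_lt] at h2
    rw [lt_iff_col] at h1 h2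
    omega
  · intro h
    obtain ⟨z, hz, hz'⟩ := exists_pt (c := col (v j)) (r := 0) (by omega) (v j) (by omega)
    refine ⟨z, ?_, ?_, hz'⟩
    · rw [lt_iff_col]; omega
    · rw [← not_lt, lt_iff_col]; omega

theorem def_colSucc (i j : ℕ) : DefP (fun _ v => col (v i) + 1 = col (v j)) := by
  refine ((def_colLt i j).and
    (DefP.ex (P := fun n v z => col (v i) < col z ∧ col z < col (v j))
    ((def_colLt (i + 1) 0).and (def_colLt 0 (j + 1)))).not).congr ?_
  intro n v
  constructor
  · rintro ⟨h, h'⟩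
    by_contra h0
    obtain ⟨z, hz, hz'⟩ := exists_pt (c := col (v i) + 1) (r := 0) (by omega) (v j) (by omega)
    exact h' ⟨z, by omega⟩
  · rintro h
    refine ⟨by omega, ?_⟩
    rintro ⟨y, hy⟩
    omega

theorem def_rowLt (i j : ℕ) : DefP (fun _ v => rowf (v i) < rowf (v j)) := by
  refine (DefP.ex (P := fun n v w => ((w : ℕ) = v j ∨ ordc w (v j)) ∧
      ∃ z : Fin (n + 1), ((z : ℕ) = v i ∨ ordc (v i) z) ∧ ordc z w ∧ ¬ col z < col w)
    (((def_eq 0 (j + 1)).or (def_ordc 0 (j + 1))).and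
      (DefP.ex (P := fun n v z => ((z : ℕ) = v (i + 1) ∨ ordc (v (i + 1)) z) ∧
          ordc z (v 0) ∧ ¬ col z < col (v 0))
        (((def_eq 0 (i + 2)).or (def_ordc (i + 2) 0)).and
          ((def_ordc 0 1).and (def_colLt 0 1).not))))).congr ?_
  intro n v
  have E : ∀ x y : Fin (n + 1), (x : ℕ) = y ↔ col x = col y ∧ rowf x = rowf y :=
    fun x y => eq_iff_col x y
  simp only [ordc, E]
  constructor
  · rintro ⟨w, h1, z, h2, h3⟩
    omega
  · intro h
    have hj := (decomp (v j)).2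
    obtain ⟨w, hw, hw'⟩ := exists_pt (c := rowf (v j)) (r := rowf (v j)) le_rfl (v j) (by omega)
    refine ⟨w, by omega, ?_⟩
    by_cases hc : rowf (v j) ≤ col (v i)
    · exact ⟨v i, by omega⟩
    · obtain ⟨z, hz, hz'⟩ := exists_pt (c := rowf (v j)) (r := rowf (v j) - 1) (by omega) (v j)
        (by omega)
      exact ⟨z, by omega⟩

theorem def_sameRow (i j : ℕ) : DefP (fun _ v => rowf (v i) = rowf (v j)) :=
  ((def_rowLt i j).not.and (def_rowLt j i).not).congr fun n v => by omega

/-- `c(v i) = r(v i)` -/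
theorem def_diag (i : ℕ) : DefP (fun _ v => col (v i) = rowf (v i)) := by
  refine (DefP.ex (P := fun n v e => rowf e = rowf (v i) ∧ col e < col (v i))
    ((def_sameRow 0 (i + 1)).and (def_colLt 0 (i + 1)))).not.congr ?_
  intro n v
  have hi := (decomp (v i)).2
  constructor
  · intro h
    by_contra h0
    obtain ⟨z, hz, hz'⟩ := exists_pt (c := rowf (v i)) (r := rowf (v i)) le_rfl (v i) (by omega)
    exact h ⟨z, by omega⟩
  · rintro h ⟨e, he⟩
    have := (decomp e).2
    omega

theorem def_bitQ : DefP (fun _ v => Nat.testBit (qf (v 0)) (rowf (v 1)) = true) := by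
  refine (DefP.ex (P := fun n v y => col y + 1 = col (v 0) ∧ rowf y = rowf (v 1) ∧ Qpred y)
    ((def_colSucc 0 1).and ((def_sameRow 0 2).and (def_Q 0)))).congr ?_
  intro n v
  unfold Qpred qf
  constructor
  · rintro ⟨y, h1, h2, h3⟩
    rwa [h1, h2] at h3
  · intro h
    have hlt : rowf (v 1) < col (v 0) := by
      by_contra hge
      have h1 := qseq_lt_two_pow (col (v 0))
      have h2 := Nat.pow_le_pow_right (n := 2) (by omega) (not_lt.1 hge)
      rw [Nat.testBit_lt_two_pow (by omega)] at h
      simp at h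
    obtain ⟨y, hy, hy'⟩ := exists_pt (c := col (v 0) - 1) (r := rowf (v 1)) (by omega) (v 0)
      (by omega)
    have e : col y + 1 = col (v 0) := by omega
    refine ⟨y, e, hy', ?_⟩
    rwa [e, hy']

theorem def_bitR : DefP (fun _ v => Nat.testBit (rowf (v 0)) (rowf (v 1)) = true) := by
  refine (DefP.ex (P := fun n v d => (rowf d = rowf (v 0) ∧ col d = rowf d) ∧
      ∃ y : Fin (n + 1), col y + 1 = col d ∧ rowf y = rowf (v 1) ∧ Cpred y)
    (((def_sameRow 0 1).and (def_diag 0)).and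
      (DefP.ex (P := fun n v y => col y + 1 = col (v 0) ∧ rowf y = rowf (v 2) ∧ Cpred y)
        ((def_colSucc 0 1).and ((def_sameRow 0 3).and (def_C 0)))))).congr ?_
  intro n v
  unfold Cpred
  constructor
  · rintro ⟨d, ⟨h4, h5⟩, y, h1, h2, h3⟩
    rwa [h1, h2, h5, h4] at h3
  · intro h
    have hlt : rowf (v 1) < rowf (v 0) := by
      by_contra hge
      have h1 := Nat.lt_two_pow_self (n := rowf (v 0))
      have h2 := Nat.pow_le_pow_right (n := 2) (by omega) (not_lt.1 hge)
      rw [Nat.testBit_lt_two_pow (by omega)] at h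
      simp at h
    have h0 := (decomp (v 0)).2
    obtain ⟨d, hd, hd'⟩ := exists_pt (c := rowf (v 0)) (r := rowf (v 0)) le_rfl (v 0) (by omega)
    obtain ⟨y, hy, hy'⟩ := exists_pt (c := rowf (v 0) - 1) (r := rowf (v 1)) (by omega) (v 0)
      (by omega)
    have e : col y + 1 = rowf (v 0) := by omega
    refine ⟨d, ⟨hd', by omega⟩, y, by omega, hy', ?_⟩
    rwa [e, hy']

/-- Lemma 3.4: there are FO(<,◁,C,Q)-formulas `φQ(x,u)` and `φR(x,u)`
expressing that bit `r(u)` of `q(x)`, respectively of `r(x)`, is 1. -/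
theorem lt_ordc_C_Q_define_bits_of_q_and_r :
    ∃ (φQ φR : L4.Formula (Fin 2)),
      ∀ n : ℕ,
        letI := struct4 n
        ∀ a b : Fin (n + 1),
          (φQ.Realize ![a, b] ↔ Nat.testBit (qf (a : ℕ)) (rowf (b : ℕ)) = true) ∧
          (φR.Realize ![a, b] ↔ Nat.testBit (rowf (a : ℕ)) (rowf (b : ℕ)) = true) := by
  obtain ⟨φ, hφ⟩ := def_bitQ
  obtain ⟨ψ, hψ⟩ := def_bitR
  let g : ℕ → Fin 2 := fun i => if i = 0 then 0 else 1
  refine ⟨φ.relabel g, ψ.relabel g, fun n => ?_⟩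
  letI := struct4 n
  intro a b
  constructor
  · rw [Formula.realize_relabel]
    exact hφ n _
  · rw [Formula.realize_relabel]
    exact hψ n _
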